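/- Let L ≥ 3 be an odd integer and let C be a CAC of length L and weight 3 all of whose codewords are equi-difference, with leave Λ = Z_L \ ⋃_{I ∈ C} d(I). If |Λ| < 4 and it is not the case that 3 divides L and both L/3 and 2L/3 (as elements of Z_L) belong to Λ, then |C| = M^e(L,3) = M(L,3); in particular, C is an optimal CAC of length L and weight 3. -/

import Mathlib

open Finset

/-- The set of differences of a codeword `I ⊆ ℤ_L`. -/
def dset {L : ℕ} (I : Finset (ZMod L)) : Finset (ZMod L) :=
  (I ×ˢ I).image fun p => p.1 - p.2

/-- The set of nonzero differences. -/
def dstar {L : ℕ} (I : Finset (ZMod L)) : Finset (ZMod L) := dset I \ {0}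

/-- A conflict-avoiding code of length `L` and weight `ω`. -/
def IsCAC (L ω : ℕ) (C : Finset (Finset (ZMod L))) : Prop :=
  (∀ I ∈ C, I.card = ω) ∧
  ∀ I ∈ C, ∀ J ∈ C, I ≠ J → Disjoint (dstar I) (dstar J)

/-- `M(L,ω)`: the maximum size of a CAC of length `L` and weight `ω`. -/
noncomputable def MCAC (L ω : ℕ) : ℕ :=
  sSup {n | ∃ C : Finset (Finset (ZMod L)), IsCAC L ω C ∧ C.card = n}

/-- An equi-difference codeword of weight three: `I = {0, g, 2g}` for some generator
`1 ≤ g ≤ L/2`. -/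
def IsEquiDiff {L : ℕ} (I : Finset (ZMod L)) : Prop :=
  ∃ g : ℕ, 1 ≤ g ∧ 2 * g ≤ L ∧ I = {0, (g : ZMod L), ((2 * g : ℕ) : ZMod L)}

/-- `M^e(L,ω)`: the maximum size of a CAC of length `L` and weight `ω` all of whose
codewords are equi-difference. -/
noncomputable def MeCAC (L ω : ℕ) : ℕ :=
  sSup {n | ∃ C : Finset (Finset (ZMod L)),
    IsCAC L ω C ∧ (∀ I ∈ C, IsEquiDiff I) ∧ C.card = n}

/-- The leave of a CAC `C` of length `L`: `Λ = ℤ_L \ ⋃_{I ∈ C} d(I)`. -/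
def leave {L : ℕ} (C : Finset (Finset (ZMod L))) : Set (ZMod L) :=
  Set.univ \ ⋃ I ∈ C, (dset I : Set (ZMod L))

lemma two_cancel {L : ℕ} (hodd : Odd L) {u : ZMod L} (h : u + u = 0) : u = 0 := by
  obtain ⟨k, hk⟩ := hodd
  have h1 : ((L : ℕ) : ZMod L) = 0 := ZMod.natCast_self L
  have h2 : (2 * (k : ZMod L) + 1) = 0 := by
    have : ((2 * k + 1 : ℕ) : ZMod L) = 0 := by rw [← hk]; exact h1
    simpa using this
  linear_combination u * h2 - (k : ZMod L) * h

lemma mem_dstar {L : ℕ} {I : Finset (ZMod L)} {u : ZMod L} :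
    u ∈ dstar I ↔ (∃ a ∈ I, ∃ b ∈ I, a - b = u) ∧ u ≠ 0 := by
  simp only [dstar, dset, mem_sdiff, mem_image, mem_product, mem_singleton, Prod.exists]
  constructor
  · rintro ⟨⟨a, b, ⟨ha, hb⟩, h⟩, h0⟩
    exact ⟨⟨a, ha, b, hb, h⟩, h0⟩
  · rintro ⟨⟨a, ha, b, hb, h⟩, h0⟩
    exact ⟨⟨a, b, ⟨ha, hb⟩, h⟩, h0⟩

lemma neg_mem_dstar {L : ℕ} {I : Finset (ZMod L)} {u : ZMod L} (h : u ∈ dstar I) :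
    -u ∈ dstar I := by
  rw [mem_dstar] at h ⊢
  obtain ⟨⟨a, ha, b, hb, h⟩, h0⟩ := h
  exact ⟨⟨b, hb, a, ha, by rw [← h]; ring⟩, neg_ne_zero.mpr h0⟩

lemma neg_ne {L : ℕ} (hodd : Odd L) {u : ZMod L} (h : u ≠ 0) : u ≠ -u := by
  intro h1
  exact h (two_cancel hodd (by linear_combination h1))

lemma two_le_card {L : ℕ} (hodd : Odd L) {I : Finset (ZMod L)} {u : ZMod L}
    (h : u ∈ dstar I) : 2 ≤ (dstar I).card := by
  have h0 := (mem_dstar.1 h).2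
  rw [← Finset.card_pair (neg_ne hodd h0)]
  apply Finset.card_le_card
  intro x hx
  simp only [mem_insert, mem_singleton] at hx
  rcases hx with rfl | rfl
  · exact h
  · exact neg_mem_dstar h

lemma four_le_card {L : ℕ} (hodd : Odd L) {I : Finset (ZMod L)} {u v : ZMod L}
    (hu : u ∈ dstar I) (hv : v ∈ dstar I) (h1 : u ≠ v) (h2 : u ≠ -v) :
    4 ≤ (dstar I).card := by
  have hu0 := neg_ne hodd (mem_dstar.1 hu).2
  have hv0 := neg_ne hodd (mem_dstar.1 hv).2
  have h3 : -u ≠ v := fun h => h2 (by rw [← h]; ring)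
  have h4 : -u ≠ -v := fun h => h1 (neg_injective h)
  have : ({u, -u, v, -v} : Finset (ZMod L)).card = 4 := by
    rw [card_insert_of_notMem, card_insert_of_notMem, card_pair hv0]
    · simp [h3, h1]
    · simp only [mem_insert, mem_singleton]; tauto
  rw [← this]
  apply Finset.card_le_card
  intro x hx
  simp only [mem_insert, mem_singleton] at hx
  rcases hx with rfl | rfl | rfl | rfl
  · exact hu
  · exact neg_mem_dstar hu
  · exact hv
  · exact neg_mem_dstar hv

lemma word_card {L : ℕ} (hodd : Odd L) {I : Finset (ZMod L)} (hI : I.card = 3) :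
    4 ≤ (dstar I).card ∨ (2 ≤ (dstar I).card ∧ ∃ u ∈ dstar I, 3 * u = 0) := by
  obtain ⟨x, y, z, hxy, hxz, hyz, rfl⟩ := Finset.card_eq_three.1 hI
  have ha : x - y ∈ dstar {x, y, z} :=
    mem_dstar.2 ⟨⟨x, by simp, y, by simp, rfl⟩, sub_ne_zero.2 hxy⟩
  have hb : y - z ∈ dstar {x, y, z} :=
    mem_dstar.2 ⟨⟨y, by simp, z, by simp, rfl⟩, sub_ne_zero.2 hyz⟩
  have hc : x - z ∈ dstar {x, y, z} :=
    mem_dstar.2 ⟨⟨x, by simp, z, by simp, rfl⟩, sub_ne_zero.2 hxz⟩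
  by_cases h1 : x - y = -(x - z)
  · by_cases h2 : y - z = -(x - z)
    · right
      exact ⟨two_le_card hodd ha, x - z, hc, by linear_combination h1 + h2⟩
    · left
      refine four_le_card hodd hb hc (fun h => hxy ?_) h2
      linear_combination -h
  · left
    refine four_le_card hodd ha hc (fun h => hyz ?_) h1
    linear_combination -h

lemma torsion {L : ℕ} (hL : 3 ≤ L) {u : ZMod L} (hu : u ≠ 0) (h : 3 * u = 0) :
    3 ∣ L ∧ (u = ((L / 3 : ℕ) : ZMod L) ∨ u = -((L / 3 : ℕ) : ZMod L)) := by
  have : NeZero L := ⟨by omega⟩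
  have hv : u.val < L := ZMod.val_lt u
  have hv0 : u.val ≠ 0 := fun h => hu ((ZMod.val_eq_zero u).1 h)
  have hc : ((u.val : ℕ) : ZMod L) = u := ZMod.natCast_zmod_val u
  have hd : L ∣ 3 * u.val := by
    rw [← ZMod.natCast_eq_zero_iff]
    push_cast
    rw [hc, h]
  obtain ⟨k, hk⟩ := hd
  have hk3 : k < 3 := by
    by_contra hh
    have : L * 3 ≤ L * k := Nat.mul_le_mul_left L (by omega)
    omega
  interval_cases k
  · omega
  · refine ⟨by omega, Or.inl ?_⟩
    rw [← hc]; congr 1; omega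
  · refine ⟨by omega, Or.inr ?_⟩
    rw [eq_neg_iff_add_eq_zero, ← hc]
    rw [← Nat.cast_add, ZMod.natCast_eq_zero_iff]
    have : u.val + L / 3 = L := by omega
    rw [this]

lemma sum_le {L : ℕ} (hL : 3 ≤ L) {C : Finset (Finset (ZMod L))} (hC : IsCAC L 3 C) :
    ∑ I ∈ C, (dstar I).card + 1 ≤ L := by
  have : NeZero L := ⟨by omega⟩
  rw [← Finset.card_biUnion (fun I hI J hJ h => hC.2 I hI J hJ h)]
  have h : C.biUnion dstar ⊆ univ.erase 0 := by
    intro x hx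
    obtain ⟨I, _, hx⟩ := mem_biUnion.1 hx
    simp [(mem_dstar.1 hx).2]
  have := card_le_card h
  rw [card_erase_of_mem (mem_univ _), card_univ, ZMod.card] at this
  omega

lemma le_sum {L : ℕ} (hL : 3 ≤ L) {C : Finset (Finset (ZMod L))} 
    (hcard : (leave C).ncard < 4) :
    L ≤ ∑ I ∈ C, (dstar I).card + 4 := by
  classical
  have : NeZero L := ⟨by omega⟩
  have h : (univ : Finset (ZMod L)) ⊆ insert 0 ((leave C).toFinset ∪ C.biUnion dstar) := by
    intro x _
    by_cases hx : x = 0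
    · simp [hx]
    · rw [mem_insert, mem_union, Set.mem_toFinset, mem_biUnion]
      by_cases hh : ∃ I ∈ C, x ∈ dset I
      · obtain ⟨I, h1, h2⟩ := hh
        exact Or.inr (Or.inr ⟨I, h1, by simp [dstar, h2, hx]⟩)
      · refine Or.inr (Or.inl ⟨Set.mem_univ _, fun hm => hh ?_⟩)
        simp only [Set.mem_iUnion, mem_coe] at hm
        obtain ⟨I, h1, h2⟩ := hm
        exact ⟨I, h1, h2⟩
  have h1 := card_le_card h
  rw [card_univ, ZMod.card] at h1
  have h2 := card_insert_le (0 : ZMod L) ((leave C).toFinset ∪ C.biUnion dstar)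
  have h3 := card_union_le (leave C).toFinset (C.biUnion dstar)
  have h4 : (C.biUnion dstar).card ≤ ∑ I ∈ C, (dstar I).card := card_biUnion_le
  rw [Set.ncard_eq_toFinset_card'] at hcard
  omega

lemma equi_sub {L : ℕ} {I : Finset (ZMod L)} (h : IsEquiDiff I) :
    ∃ g : ZMod L, dstar I ⊆ {g, -g, 2 * g, -(2 * g)} := by
  obtain ⟨g, _, _, rfl⟩ := h
  refine ⟨g, fun x hx => ?_⟩
  obtain ⟨⟨a, ha, b, hb, h⟩, h0⟩ := mem_dstar.1 hx
  push_cast at ha hb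
  simp only [mem_insert, mem_singleton] at ha hb ⊢
  rcases ha with rfl | rfl | rfl <;> rcases hb with rfl | rfl | rfl <;> ring_nf at h ⊢ <;>
    subst h <;> simp at h0 ⊢

lemma equi_le_four {L : ℕ} {I : Finset (ZMod L)} (h : IsEquiDiff I) :
    (dstar I).card ≤ 4 := by
  obtain ⟨g, hg⟩ := equi_sub h
  exact (card_le_card hg).trans card_le_four

lemma equi_le_two {L : ℕ} (hodd : Odd L) {I : Finset (ZMod L)} (h : IsEquiDiff I)
    {u : ZMod L} (hu : u ∈ dstar I) (h3 : 3 * u = 0) : (dstar I).card ≤ 2 := by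
  obtain ⟨g, hg⟩ := equi_sub h
  have hg3 : 3 * g = 0 := by
    have := hg hu
    simp only [mem_insert, mem_singleton] at this
    rcases this with rfl | rfl | rfl | rfl
    · exact h3
    · linear_combination -h3
    · exact two_cancel hodd (by linear_combination h3)
    · exact two_cancel hodd (by linear_combination -h3)
  have h2 : 2 * g = -g := by linear_combination hg3
  have : dstar I ⊆ {g, -g} := by
    intro x hx
    have := hg hx
    rw [h2] at this
    simp only [mem_insert, mem_singleton, neg_neg] at this ⊢
    tauto
  exact (card_le_card this).trans card_le_two

lemma upper {L : ℕ} (hL : 3 ≤ L) (hodd : Odd L) {C : Finset (Finset (ZMod L))}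
    (hC : IsCAC L 3 C) : 4 * C.card ≤ L + 1 := by
  classical
  set t : ZMod L := ((L / 3 : ℕ) : ZMod L) with ht
  have h1 : ∀ I ∈ C, 4 ≤ (dstar I).card + if t ∈ dstar I then 2 else 0 := by
    intro I hI
    rcases word_card hodd (hC.1 I hI) with h | ⟨h, u, hu, hu3⟩
    · omega
    · have : t ∈ dstar I := by
        rcases (torsion hL (mem_dstar.1 hu).2 hu3).2 with h | h
        · rw [ht, ← h]; exact hu
        · have := neg_mem_dstar hu
          rwa [h, neg_neg] at this
      rw [if_pos this]; omega
  have h2 := Finset.sum_le_sum h1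
  rw [sum_const, smul_eq_mul, sum_add_distrib, ← sum_filter, sum_const, smul_eq_mul] at h2
  have h3 : (C.filter fun I => t ∈ dstar I).card ≤ 1 := by
    rw [card_le_one]
    intro I hI J hJ
    rw [mem_filter] at hI hJ
    by_contra hne
    exact Finset.disjoint_left.1 (hC.2 I hI.1 J hJ.1 hne) hI.2 hJ.2
  have := sum_le hL hC
  omega

lemma upper' {L : ℕ} (hL : 3 ≤ L) (hodd : Odd L) (hd : ¬ 3 ∣ L)
    {C : Finset (Finset (ZMod L))} (hC : IsCAC L 3 C) : 4 * C.card + 1 ≤ L := by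
  have h1 : ∀ I ∈ C, 4 ≤ (dstar I).card := by
    intro I hI
    rcases word_card hodd (hC.1 I hI) with h | ⟨h, u, hu, hu3⟩
    · exact h
    · exact absurd (torsion hL (mem_dstar.1 hu).2 hu3).1 hd
  have h2 := Finset.sum_le_sum h1
  rw [sum_const, smul_eq_mul] at h2
  have := sum_le hL hC
  omega

lemma main_bound (L : ℕ) (hL : 3 ≤ L) (hodd : Odd L)
    (C : Finset (Finset (ZMod L))) 
    (hequi : ∀ I ∈ C, IsEquiDiff I)
    (hcard : (leave C).ncard < 4)
    (hnot : ¬ (3 ∣ L ∧ ((L / 3 : ℕ) : ZMod L) ∈ leave C ∧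
        ((2 * L / 3 : ℕ) : ZMod L) ∈ leave C))
    (D : Finset (Finset (ZMod L))) (hD : IsCAC L 3 D) : D.card ≤ C.card := by
  classical
  have hl := le_sum hL hcard
  have h4 : ∀ I ∈ C, (dstar I).card ≤ 4 := fun I hI => equi_le_four (hequi I hI)
  by_cases hd : 3 ∣ L
  · have key : ∃ I ∈ C, ∃ u ∈ dstar I, 3 * u = 0 := by
      have aux : ∀ n : ℕ, 0 < n → n < L → L ∣ 3 * n → ((n : ℕ) : ZMod L) ∉ leave C →
          ∃ I ∈ C, ∃ u ∈ dstar I, 3 * u = 0 := by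
        intro n h0 hn hdv hmem
        simp only [leave, Set.mem_sdiff, Set.mem_univ, true_and, not_not, Set.mem_iUnion,
          mem_coe] at hmem
        obtain ⟨I, hI, h⟩ := hmem
        refine ⟨I, hI, n, ?_, ?_⟩
        · simp only [dstar, mem_sdiff, mem_singleton]
          refine ⟨h, fun hz => ?_⟩
          rw [ZMod.natCast_eq_zero_iff] at hz
          exact absurd (Nat.le_of_dvd h0 hz) (by omega)
        · rw [← ZMod.natCast_eq_zero_iff] at hdv
          exact_mod_cast hdv
      by_cases ht : ((L / 3 : ℕ) : ZMod L) ∈ leave C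
      · refine aux (2 * L / 3) (by omega) (by omega) ⟨2, by omega⟩ fun h => hnot ⟨hd, ht, h⟩
      · exact aux (L / 3) (by omega) (by omega) ⟨1, by omega⟩ ht
    obtain ⟨I, hI, u, hu, h3⟩ := key
    have h2 := equi_le_two hodd (hequi I hI) hu h3
    have hs := Finset.add_sum_erase C (fun I => (dstar I).card) hI
    have hs2 : ∑ J ∈ C.erase I, (dstar J).card ≤ (C.erase I).card * 4 := by
      rw [← smul_eq_mul]
      exact Finset.sum_le_card_nsmul _ _ _ fun J hJ => h4 J (mem_of_mem_erase hJ)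
    have hs3 := card_erase_add_one hI
    have := upper hL hodd hD
    omega
  · have := upper' hL hodd hd hD
    have hs2 : ∑ J ∈ C, (dstar J).card ≤ C.card * 4 := by
      rw [← smul_eq_mul]
      exact Finset.sum_le_card_nsmul _ _ _ h4
    omega

theorem optimal_of_small_leave (L : ℕ) (hL : 3 ≤ L) (hodd : Odd L)
    (C : Finset (Finset (ZMod L))) (hC : IsCAC L 3 C)
    (hequi : ∀ I ∈ C, IsEquiDiff I)
    (hcard : (leave C).ncard < 4)
    (hnot : ¬ (3 ∣ L ∧ ((L / 3 : ℕ) : ZMod L) ∈ leave C ∧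
        ((2 * L / 3 : ℕ) : ZMod L) ∈ leave C)) :
    C.card = MeCAC L 3 ∧ MeCAC L 3 = MCAC L 3 := by
  have hb := main_bound L hL hodd C hequi hcard hnot
  have h1 : MeCAC L 3 = C.card := IsGreatest.csSup_eq
    ⟨⟨C, hC, hequi, rfl⟩, by rintro n ⟨D, hD, _, rfl⟩; exact hb D hD⟩
  have h2 : MCAC L 3 = C.card := IsGreatest.csSup_eq
    ⟨⟨C, hC, rfl⟩, by rintro n ⟨D, hD, rfl⟩; exact hb D hD⟩
  exact ⟨h1.symm, h1.trans h2.symm⟩
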